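/- There exists a constant c such that for every finite set AP of atomic propositions, finite set Γ of edge labels, every ICPDL(AP,Γ) sentence Φ, and every k > 0, there is an ICPDL(AP^k, {↓0,↓1}) sentence Φ~^k of size at most c·k²·|Φ| such that for every valid k-STT τ with ⟦τ⟧ = (G,χ): G ⊨ Φ if and only if τ ⊨ Φ~^k. Moreover, if Φ is in LCPDL (no intersection of path formulas), then Φ~^k can be chosen in LCPDL. -/

import Mathlib

/-! ### Monadic second-order logic over vertex- and edge-labeled structures -/

/-- MSO formulas over structures with vertex labels `Vl` and binary relations
indexed by `El`.  First-order variables and set variables are indexed by `ℕ`. -/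
inductive GMSO (Vl El : Type) : Type
  | lab (a : Vl) (x : ℕ)
  | edge (γ : El) (x y : ℕ)
  | eq (x y : ℕ)
  | mem (x X : ℕ)
  | or (φ ψ : GMSO Vl El)
  | not (φ : GMSO Vl El)
  | exFO (x : ℕ) (φ : GMSO Vl El)
  | exSO (X : ℕ) (φ : GMSO Vl El)

namespace GMSO

variable {Vl El : Type} {V : Type}

/-- Satisfaction of an MSO formula in a structure with domain `dom`, labeling
relation `lab` and edge relations `edge`, under valuations `ν` (first-order,
partial) and `μ` (second-order). -/
def Sat (dom : Set V) (lab : V → Vl → Prop) (edge : El → V → V → Prop) :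
    (ℕ → Option V) → (ℕ → Set V) → GMSO Vl El → Prop
  | ν, _, .lab a x => ∃ v, ν x = some v ∧ v ∈ dom ∧ lab v a
  | ν, _, .edge γ x y => ∃ u v, ν x = some u ∧ ν y = some v ∧ edge γ u v
  | ν, _, .eq x y => ∃ v, ν x = some v ∧ ν y = some v
  | ν, μ, .mem x X => ∃ v, ν x = some v ∧ v ∈ μ X
  | ν, μ, .or φ ψ => Sat dom lab edge ν μ φ ∨ Sat dom lab edge ν μ ψ
  | ν, μ, .not φ => ¬ Sat dom lab edge ν μ φ
  | ν, μ, .exFO x φ => ∃ v ∈ dom, Sat dom lab edge (Function.update ν x (some v)) μ φ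
  | ν, μ, .exSO X φ => ∃ E : Set V, E ⊆ dom ∧ Sat dom lab edge ν (Function.update μ X E) φ

/-- Free first-order variables. -/
def freeFO : GMSO Vl El → Set ℕ
  | .lab _ x => {x}
  | .edge _ x y => {x, y}
  | .eq x y => {x, y}
  | .mem x _ => {x}
  | .or φ ψ => freeFO φ ∪ freeFO ψ
  | .not φ => freeFO φ
  | .exFO x φ => freeFO φ \ {x}
  | .exSO _ φ => freeFO φ

/-- Free second-order variables. -/
def freeSO : GMSO Vl El → Set ℕ
  | .lab _ _ => ∅
  | .edge _ _ _ => ∅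
  | .eq _ _ => ∅
  | .mem _ X => {X}
  | .or φ ψ => freeSO φ ∪ freeSO ψ
  | .not φ => freeSO φ
  | .exFO _ φ => freeSO φ
  | .exSO X φ => freeSO φ \ {X}

/-- A sentence is a formula without free variables. -/
def Closed (φ : GMSO Vl El) : Prop := freeFO φ = ∅ ∧ freeSO φ = ∅

/-- Satisfaction of a sentence (valuations are irrelevant for sentences). -/
def Models (dom : Set V) (lab : V → Vl → Prop) (edge : El → V → V → Prop)
    (φ : GMSO Vl El) : Prop :=
  Sat dom lab edge (fun _ => none) (fun _ => ∅) φ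

/-- First-order formulas: no second-order quantification. -/
def FirstOrder : GMSO Vl El → Prop
  | .or φ ψ => FirstOrder φ ∧ FirstOrder ψ
  | .not φ => FirstOrder φ
  | .exFO _ φ => FirstOrder φ
  | .exSO _ _ => False
  | _ => True

/-- EMSO formulas: a block of existential second-order quantifiers followed by a
first-order formula. -/
inductive IsEMSO : GMSO Vl El → Prop
  | fo {φ : GMSO Vl El} : FirstOrder φ → IsEMSO φ
  | ex {X : ℕ} {φ : GMSO Vl El} : IsEMSO φ → IsEMSO (.exSO X φ)

end GMSO
/-! ### Labeled binary trees (with unary nodes) and MSO over them -/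

/-- Λ-labeled trees in which every node has 0, 1, or 2 children. -/
inductive BTree (Λ : Type) : Type
  | leaf (l : Λ)
  | unary (l : Λ) (t : BTree Λ)
  | binary (l : Λ) (t₁ t₂ : BTree Λ)

namespace BTree

variable {Λ : Type}

/-- The label at a position (a path from the root; `false` = child 0,
`true` = child 1), if the position exists. -/
def labelAt : BTree Λ → List Bool → Option Λ
  | .leaf l, [] => some l
  | .unary l _, [] => some l
  | .binary l _ _, [] => some l
  | .unary _ t, false :: p => t.labelAt p
  | .binary _ t₁ _, false :: p => t₁.labelAt p
  | .binary _ _ t₂, true :: p => t₂.labelAt p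
  | _, _ => none

/-- The set of node positions of a tree. -/
def positions (t : BTree Λ) : Set (List Bool) := {p | (t.labelAt p).isSome}

/-- The `b`-child relation (`b = false`: child 0, `b = true`: child 1). -/
def childRel (t : BTree Λ) (b : Bool) (p q : List Bool) : Prop :=
  q = p ++ [b] ∧ q ∈ t.positions

/-- Satisfaction of an MSO sentence over the tree (atoms: labels, `↓0`, `↓1`). -/
def TSat (t : BTree Λ) (φ : GMSO Λ Bool) : Prop :=
  GMSO.Models t.positions (fun p l => t.labelAt p = some l) t.childRel φ

end BTree
/-! ### Special tree terms (STTs) and their graph semantics -/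

/-- Special tree terms over vertex labels `Vl` and edge labels `El`,
with colors in `ℕ`. -/
inductive STT (Vl El : Type) : Type
  | atom (i : ℕ) (a : Vl)
  | add (γ : El) (i j : ℕ) (τ : STT Vl El)
  | forget (i : ℕ) (τ : STT Vl El)
  | plus (τ₁ τ₂ : STT Vl El)

namespace STT

variable {Vl El : Type}

/-- The active colors of a term. -/
def activeColors : STT Vl El → Set ℕ
  | .atom i _ => {i}
  | .add _ _ _ τ => τ.activeColors
  | .forget i τ => τ.activeColors \ {i}
  | .plus τ₁ τ₂ => τ₁.activeColors ∪ τ₂.activeColors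

/-- Valid `k`-STTs: colors in `[k] = {1,…,k}`, and the two arguments of `⊕`
have disjoint sets of active colors. -/
def Valid (k : ℕ) : STT Vl El → Prop
  | .atom i _ => 1 ≤ i ∧ i ≤ k
  | .add _ i j τ => 1 ≤ i ∧ i ≤ k ∧ 1 ≤ j ∧ j ≤ k ∧ τ.Valid k
  | .forget i τ => 1 ≤ i ∧ i ≤ k ∧ τ.Valid k
  | .plus τ₁ τ₂ => τ₁.Valid k ∧ τ₂.Valid k ∧ Disjoint τ₁.activeColors τ₂.activeColors

/-- The (partial, injective) coloring `χ_τ`, mapping a color to the position of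
the vertex currently carrying it.  Vertices are identified with the positions
of the atoms in the term (`false` = unique/left child, `true` = right child). -/
def chi : STT Vl El → ℕ → Option (List Bool)
  | .atom i _, j => if j = i then some [] else none
  | .add _ _ _ τ, j => (τ.chi j).map (false :: ·)
  | .forget i τ, j => if j = i then none else (τ.chi j).map (false :: ·)
  | .plus τ₁ τ₂, j =>
      match τ₁.chi j with
      | some p => some (false :: p)
      | none => (τ₂.chi j).map (true :: ·)

/-- The label of a vertex (i.e., of an atom position) of `G_τ`. -/
def vlabel : STT Vl El → List Bool → Option Vl
  | .atom _ a, [] => some a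
  | .add _ _ _ τ, false :: p => τ.vlabel p
  | .forget _ τ, false :: p => τ.vlabel p
  | .plus τ₁ _, false :: p => τ₁.vlabel p
  | .plus _ τ₂, true :: p => τ₂.vlabel p
  | _, _ => none

/-- The vertex set of `G_τ`. -/
def vertices (τ : STT Vl El) : Set (List Bool) := {p | (τ.vlabel p).isSome}

/-- The `γ`-labeled edge relation of `G_τ`. -/
def edgeRel : STT Vl El → El → List Bool → List Bool → Prop
  | .atom _ _, _, _, _ => False
  | .add γ' i j τ, γ, u, v =>
      (∃ u' v', u = false :: u' ∧ v = false :: v' ∧ τ.edgeRel γ u' v') ∨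
      (γ = γ' ∧ ∃ pu pv, τ.chi i = some pu ∧ τ.chi j = some pv ∧
        u = false :: pu ∧ v = false :: pv)
  | .forget _ τ, γ, u, v => ∃ u' v', u = false :: u' ∧ v = false :: v' ∧ τ.edgeRel γ u' v'
  | .plus τ₁ τ₂, γ, u, v =>
      (∃ u' v', u = false :: u' ∧ v = false :: v' ∧ τ₁.edgeRel γ u' v') ∨
      (∃ u' v', u = true :: u' ∧ v = true :: v' ∧ τ₂.edgeRel γ u' v')

/-- `G_τ` is acyclic: the union of all edge relations has an irreflexive
transitive closure. -/
def Acyclic (τ : STT Vl El) : Prop :=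
  ∀ p, ¬ Relation.TransGen (fun u v => ∃ γ, τ.edgeRel γ u v) p p

/-- Satisfaction of a graph-MSO sentence in the graph `G_τ`. -/
def graphSat (τ : STT Vl El) (φ : GMSO Vl El) : Prop :=
  GMSO.Models τ.vertices (fun p a => τ.vlabel p = some a) τ.edgeRel φ

end STT

/-- The label alphabet `Λ^k` of `k`-STTs, seen as labeled binary trees. -/
inductive STTLabel (Vl El : Type) : Type
  | atom (i : ℕ) (a : Vl)
  | add (γ : El) (i j : ℕ)
  | forget (i : ℕ)
  | plus

/-- The binary tree underlying a special tree term. -/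
def STT.toTree {Vl El : Type} : STT Vl El → BTree (STTLabel Vl El)
  | .atom i a => .leaf (.atom i a)
  | .add γ i j τ => .unary (.add γ i j) τ.toTree
  | .forget i τ => .unary (.forget i) τ.toTree
  | .plus τ₁ τ₂ => .binary .plus τ₁.toTree τ₂.toTree
/-! ### ICPDL over labeled graphs -/

mutual
  /-- ICPDL state formulas over atomic propositions `AP` and programs `Γ`. -/
  inductive IcS (AP Γ : Type) : Type
    | prop (p : AP)
    | or (σ₁ σ₂ : IcS AP Γ)
    | not (σ : IcS AP Γ)
    | diam (π : IcP AP Γ) (σ : IcS AP Γ)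
    | loop (π : IcP AP Γ)
  /-- ICPDL path formulas. -/
  inductive IcP (AP Γ : Type) : Type
    | base (γ : Γ)
    | test (σ : IcS AP Γ)
    | plus (π₁ π₂ : IcP AP Γ)
    | comp (π₁ π₂ : IcP AP Γ)
    | star (π : IcP AP Γ)
    | conv (π : IcP AP Γ)
    | inter (π₁ π₂ : IcP AP Γ)
end

/-- ICPDL sentences. -/
inductive IcSentence (AP Γ : Type) : Type
  | ex (σ : IcS AP Γ)
  | or (Φ₁ Φ₂ : IcSentence AP Γ)
  | not (Φ : IcSentence AP Γ)

section IcSem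

variable {AP Γ V : Type}

mutual
  /-- Semantics of ICPDL state formulas in a `(2^AP, Γ)`-labeled graph. -/
  def icSSem (dom : Set V) (lab : V → AP → Prop) (edge : Γ → V → V → Prop) :
      IcS AP Γ → V → Prop
    | .prop p => fun v => v ∈ dom ∧ lab v p
    | .or σ₁ σ₂ => fun v => icSSem dom lab edge σ₁ v ∨ icSSem dom lab edge σ₂ v
    | .not σ => fun v => v ∈ dom ∧ ¬ icSSem dom lab edge σ v
    | .diam π σ => fun v => ∃ w, icPSem dom lab edge π v w ∧ icSSem dom lab edge σ w
    | .loop π => fun v => icPSem dom lab edge π v v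
  /-- Semantics of ICPDL path formulas. -/
  def icPSem (dom : Set V) (lab : V → AP → Prop) (edge : Γ → V → V → Prop) :
      IcP AP Γ → V → V → Prop
    | .base γ => fun u v => edge γ u v
    | .test σ => fun u v => u = v ∧ icSSem dom lab edge σ u
    | .plus π₁ π₂ => fun u v => icPSem dom lab edge π₁ u v ∨ icPSem dom lab edge π₂ u v
    | .comp π₁ π₂ => fun u v => ∃ w, icPSem dom lab edge π₁ u w ∧ icPSem dom lab edge π₂ w v
    | .star π => fun u v =>
        (u ∈ dom ∧ u = v) ∨ Relation.TransGen (fun a b => icPSem dom lab edge π a b) u v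
    | .conv π => fun u v => icPSem dom lab edge π v u
    | .inter π₁ π₂ => fun u v => icPSem dom lab edge π₁ u v ∧ icPSem dom lab edge π₂ u v
end

/-- Semantics of ICPDL sentences. -/
def icSentSem (dom : Set V) (lab : V → AP → Prop) (edge : Γ → V → V → Prop) :
    IcSentence AP Γ → Prop
  | .ex σ => ∃ v ∈ dom, icSSem dom lab edge σ v
  | .or Φ₁ Φ₂ => icSentSem dom lab edge Φ₁ ∨ icSentSem dom lab edge Φ₂
  | .not Φ => ¬ icSentSem dom lab edge Φ

end IcSem

section IcSize

variable {AP Γ : Type}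

mutual
  /-- Size of a state formula. -/
  def IcS.size : IcS AP Γ → ℕ
    | .prop _ => 1
    | .or σ₁ σ₂ => σ₁.size + σ₂.size + 1
    | .not σ => σ.size + 1
    | .diam π σ => π.size + σ.size + 1
    | .loop π => π.size + 1
  /-- Size of a path formula. -/
  def IcP.size : IcP AP Γ → ℕ
    | .base _ => 1
    | .test σ => σ.size + 1
    | .plus π₁ π₂ => π₁.size + π₂.size + 1
    | .comp π₁ π₂ => π₁.size + π₂.size + 1
    | .star π => π.size + 1
    | .conv π => π.size + 1
    | .inter π₁ π₂ => π₁.size + π₂.size + 1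
end

/-- Size of a sentence. -/
def IcSentence.size : IcSentence AP Γ → ℕ
  | .ex σ => σ.size + 1
  | .or Φ₁ Φ₂ => Φ₁.size + Φ₂.size + 1
  | .not Φ => Φ.size + 1

mutual
  /-- LCPDL: no intersection of path formulas. -/
  def IcS.NoInter : IcS AP Γ → Prop
    | .prop _ => True
    | .or σ₁ σ₂ => σ₁.NoInter ∧ σ₂.NoInter
    | .not σ => σ.NoInter
    | .diam π σ => π.NoInter ∧ σ.NoInter
    | .loop π => π.NoInter
  def IcP.NoInter : IcP AP Γ → Prop
    | .base _ => True
    | .test σ => σ.NoInter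
    | .plus π₁ π₂ => π₁.NoInter ∧ π₂.NoInter
    | .comp π₁ π₂ => π₁.NoInter ∧ π₂.NoInter
    | .star π => π.NoInter
    | .conv π => π.NoInter
    | .inter _ _ => False
end

def IcSentence.NoInter : IcSentence AP Γ → Prop
  | .ex σ => σ.NoInter
  | .or Φ₁ Φ₂ => Φ₁.NoInter ∧ Φ₂.NoInter
  | .not Φ => Φ.NoInter

end IcSize

/-- The atomic propositions `AP^k` used on the tree encoding of an STT. -/
inductive APk (AP Γ : Type) : Type
  | base (p : AP)
  | plus
  | color (i : ℕ)
  | add (γ : Γ) (i j : ℕ)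
  | forget (i : ℕ)

/-- The propositions holding at a node of the tree of an STT over vertex labels
`2^AP`: the proposition of the node's `Λ^k`-label, and for a leaf `(i,a)` the
color proposition `color_i` together with the propositions in `a`. -/
def sttTreeLab {AP Γ : Type} (τ : STT (Set AP) Γ) (v : List Bool) :
    APk AP Γ → Prop := fun q =>
  match (STT.toTree τ).labelAt v with
  | some (.atom i a) => q = .color i ∨ ∃ p, q = .base p ∧ p ∈ a
  | some (.add γ i j) => q = .add γ i j
  | some (.forget i) => q = .forget i
  | some .plus => q = .plus
  | none => False

/-!
The vertices of `G_τ` are the leaves of the tree of `τ`, and a vertex `u` carries the color `i` at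
an ancestor `n` exactly when `u` is an `i`-leaf and no node from `u` up to `n` forgets `i`. Hence
there is a `γ`-edge from `u` to `v` iff some node labeled `Add^γ_{i,j}` is reached from `u` by
climbing from an `i`-leaf without meeting `Forget_i`, and from `v` by climbing from a `j`-leaf
without meeting `Forget_j`. For fixed `i` and `j` this is a path formula of constant size without
intersection, so the union over all pairs of colors has size `O(k²)`. Substituting it for `γ`, and
relativizing negation and iteration to the leaves, translates every formula.
-/

/-! ### Labeled graphs and interpretations between them -/

/-- A `(2^AP, Γ)`-labeled graph. Its vertices form a subset of an ambient type `V`, so that an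
interpreted graph can share the ambient type of the graph interpreting it. -/
structure LabeledGraph (AP Γ V : Type) where
  dom : Set V
  lab : V → AP → Prop
  edge : Γ → V → V → Prop
  mem_dom_of_edge : ∀ {γ u v}, edge γ u v → u ∈ dom ∧ v ∈ dom

namespace LabeledGraph

variable {AP Γ V : Type}

/-- `v ∈ ⟦σ⟧_G`. -/
def StateSat (G : LabeledGraph AP Γ V) (σ : IcS AP Γ) (v : V) : Prop :=
  icSSem G.dom G.lab G.edge σ v

/-- `(u, v) ∈ ⟦π⟧_G`. -/
def PathSat (G : LabeledGraph AP Γ V) (π : IcP AP Γ) (u v : V) : Prop :=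
  icPSem G.dom G.lab G.edge π u v

/-- `G ⊨ Φ`. -/
def Models (G : LabeledGraph AP Γ V) (Φ : IcSentence AP Γ) : Prop :=
  icSentSem G.dom G.lab G.edge Φ

variable (G : LabeledGraph AP Γ V) {σ σ₁ σ₂ : IcS AP Γ} {π π₁ π₂ : IcP AP Γ} {u v : V}

@[simp]
theorem stateSat_prop {p : AP} : G.StateSat (.prop p) v ↔ v ∈ G.dom ∧ G.lab v p := Iff.rfl

@[simp]
theorem stateSat_or : G.StateSat (.or σ₁ σ₂) v ↔ G.StateSat σ₁ v ∨ G.StateSat σ₂ v := Iff.rfl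

@[simp]
theorem stateSat_not : G.StateSat (.not σ) v ↔ v ∈ G.dom ∧ ¬ G.StateSat σ v := Iff.rfl

@[simp]
theorem pathSat_base {γ : Γ} : G.PathSat (.base γ) u v ↔ G.edge γ u v := Iff.rfl

@[simp]
theorem pathSat_test : G.PathSat (.test σ) u v ↔ u = v ∧ G.StateSat σ u := Iff.rfl

@[simp]
theorem pathSat_plus :
    G.PathSat (.plus π₁ π₂) u v ↔ G.PathSat π₁ u v ∨ G.PathSat π₂ u v := Iff.rfl

@[simp]
theorem pathSat_comp :
    G.PathSat (.comp π₁ π₂) u v ↔ ∃ w, G.PathSat π₁ u w ∧ G.PathSat π₂ w v := Iff.rfl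

@[simp]
theorem pathSat_star :
    G.PathSat (.star π) u v ↔ (u ∈ G.dom ∧ u = v) ∨ Relation.TransGen (G.PathSat π) u v := Iff.rfl

@[simp]
theorem pathSat_conv : G.PathSat (.conv π) u v ↔ G.PathSat π v u := Iff.rfl

mutual

theorem mem_dom_of_stateSat : ∀ (σ : IcS AP Γ) {v : V}, G.StateSat σ v → v ∈ G.dom
  | .prop _, _, h => h.1
  | .or σ₁ σ₂, _, h => h.elim (mem_dom_of_stateSat σ₁) (mem_dom_of_stateSat σ₂)
  | .not _, _, h => h.1
  | .diam π _, _, ⟨_, hπ, _⟩ => (mem_dom_of_pathSat π hπ).1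
  | .loop π, _, h => (mem_dom_of_pathSat π h).1

theorem mem_dom_of_pathSat :
    ∀ (π : IcP AP Γ) {u v : V}, G.PathSat π u v → u ∈ G.dom ∧ v ∈ G.dom
  | .base _, _, _, h => G.mem_dom_of_edge h
  | .test σ, _, _, ⟨huv, hσ⟩ =>
    have hu := mem_dom_of_stateSat σ hσ
    ⟨hu, huv ▸ hu⟩
  | .plus π₁ π₂, _, _, h => h.elim (mem_dom_of_pathSat π₁) (mem_dom_of_pathSat π₂)
  | .comp π₁ π₂, _, _, ⟨_, h₁, h₂⟩ => ⟨(mem_dom_of_pathSat π₁ h₁).1, (mem_dom_of_pathSat π₂ h₂).2⟩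
  | .star π, _, _, h => by
    rcases h with ⟨hu, rfl⟩ | h
    · exact ⟨hu, hu⟩
    · obtain ⟨_, hfirst, -⟩ := Relation.TransGen.head'_iff.1 h
      obtain ⟨_, -, hlast⟩ := Relation.TransGen.tail'_iff.1 h
      exact ⟨(mem_dom_of_pathSat π hfirst).1, (mem_dom_of_pathSat π hlast).2⟩
  | .conv π, _, _, h => (mem_dom_of_pathSat π h).symm
  | .inter π₁ _, _, _, h => mem_dom_of_pathSat π₁ h.1

end

theorem pathSat_star_iff_reflTransGen (hu : u ∈ G.dom) :
    G.PathSat (.star π) u v ↔ Relation.ReflTransGen (G.PathSat π) u v := by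
  simp only [pathSat_star, hu, true_and, Relation.reflTransGen_iff_eq_or_transGen,
    eq_comm (a := u)]

end LabeledGraph

/-- An ICPDL interpretation of `(2^AP, Γ)`-labeled graphs in `(2^AP', Γ')`-labeled graphs: formulas
defining the vertices, the atomic propositions and the edges of the interpreted graph. -/
structure IcInterpretation (AP Γ AP' Γ' : Type) where
  dom : IcS AP' Γ'
  lab : AP → IcS AP' Γ'
  edge : Γ → IcP AP' Γ'

namespace IcInterpretation

variable {AP Γ AP' Γ' V : Type} (I : IcInterpretation AP Γ AP' Γ')

mutual

/-- The translation of state formulas along an interpretation. Only negation has to be relativized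
to the interpreted vertices. -/
def mapState : IcS AP Γ → IcS AP' Γ'
  | .prop p => I.lab p
  | .or σ₁ σ₂ => .or (mapState σ₁) (mapState σ₂)
  | .not σ => .not (.or (.not I.dom) (mapState σ))
  | .diam π σ => .diam (mapPath π) (mapState σ)
  | .loop π => .loop (mapPath π)

/-- The translation of path formulas along an interpretation. Only the empty iterations of a star
have to be relativized to the interpreted vertices. -/
def mapPath : IcP AP Γ → IcP AP' Γ'
  | .base γ => I.edge γ
  | .test σ => .test (mapState σ)
  | .plus π₁ π₂ => .plus (mapPath π₁) (mapPath π₂)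
  | .comp π₁ π₂ => .comp (mapPath π₁) (mapPath π₂)
  | .star π => .comp (.test I.dom) (.star (mapPath π))
  | .conv π => .conv (mapPath π)
  | .inter π₁ π₂ => .inter (mapPath π₁) (mapPath π₂)

end

/-- The translation of sentences along an interpretation. -/
def mapSentence : IcSentence AP Γ → IcSentence AP' Γ'
  | .ex σ => .ex (I.mapState σ)
  | .or Φ₁ Φ₂ => .or (mapSentence Φ₁) (mapSentence Φ₂)
  | .not Φ => .not (mapSentence Φ)

/-- The formulas of `I`, evaluated in `H`, define the graph `G`. -/
structure Defines (H : LabeledGraph AP' Γ' V) (G : LabeledGraph AP Γ V) : Prop where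
  dom_iff : ∀ {v}, H.StateSat I.dom v ↔ v ∈ G.dom
  lab_iff : ∀ {p v}, H.StateSat (I.lab p) v ↔ v ∈ G.dom ∧ G.lab v p
  edge_iff : ∀ {γ u v}, H.PathSat (I.edge γ) u v ↔ G.edge γ u v

section Semantics

variable {I} {H : LabeledGraph AP' Γ' V} {G : LabeledGraph AP Γ V}

theorem Defines.dom_subset (h : I.Defines H G) : G.dom ⊆ H.dom :=
  fun _ hv => H.mem_dom_of_stateSat _ (h.dom_iff.2 hv)

theorem Defines.stateSat_relativized_not_iff (h : I.Defines H G) {σ : IcS AP' Γ'} {v : V} :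
    H.StateSat (.not (.or (.not I.dom) σ)) v ↔ v ∈ G.dom ∧ ¬ H.StateSat σ v := by
  have hsub : v ∈ G.dom → v ∈ H.dom := fun hv => h.dom_subset hv
  simp only [LabeledGraph.stateSat_not, LabeledGraph.stateSat_or, h.dom_iff]
  tauto

theorem Defines.pathSat_relativized_star_iff (h : I.Defines H G) {π : IcP AP' Γ'}
    (hπ : ∀ {u v}, H.PathSat π u v → u ∈ G.dom) {u v : V} :
    H.PathSat (.comp (.test I.dom) (.star π)) u v ↔
      (u ∈ G.dom ∧ u = v) ∨ Relation.TransGen (H.PathSat π) u v := by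
  have hsub : u ∈ G.dom → u ∈ H.dom := fun hu => h.dom_subset hu
  have hsource : Relation.TransGen (H.PathSat π) u v → u ∈ G.dom := fun hpath => by
    obtain ⟨_, hfirst, -⟩ := Relation.TransGen.head'_iff.1 hpath
    exact hπ hfirst
  simp only [LabeledGraph.pathSat_comp, LabeledGraph.pathSat_test, LabeledGraph.pathSat_star,
    h.dom_iff, and_assoc, exists_eq_left']
  tauto

mutual

theorem Defines.stateSat_mapState_iff (h : I.Defines H G) :
    ∀ (σ : IcS AP Γ) {v : V}, H.StateSat (I.mapState σ) v ↔ G.StateSat σ v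
  | .prop _, _ => h.lab_iff
  | .or σ₁ σ₂, _ => or_congr (h.stateSat_mapState_iff σ₁) (h.stateSat_mapState_iff σ₂)
  | .not σ, _ =>
    h.stateSat_relativized_not_iff.trans (and_congr_right' (not_congr (h.stateSat_mapState_iff σ)))
  | .diam π σ, _ =>
    exists_congr fun _ => and_congr (h.pathSat_mapPath_iff π) (h.stateSat_mapState_iff σ)
  | .loop π, _ => h.pathSat_mapPath_iff π

theorem Defines.pathSat_mapPath_iff (h : I.Defines H G) :
    ∀ (π : IcP AP Γ) {u v : V}, H.PathSat (I.mapPath π) u v ↔ G.PathSat π u v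
  | .base _, _, _ => h.edge_iff
  | .test σ, _, _ => and_congr_right' (h.stateSat_mapState_iff σ)
  | .plus π₁ π₂, _, _ => or_congr (h.pathSat_mapPath_iff π₁) (h.pathSat_mapPath_iff π₂)
  | .comp π₁ π₂, _, _ =>
    exists_congr fun _ => and_congr (h.pathSat_mapPath_iff π₁) (h.pathSat_mapPath_iff π₂)
  | .star π, u, v => by
    have ih : H.PathSat (I.mapPath π) = G.PathSat π := by
      ext
      exact h.pathSat_mapPath_iff π
    rw [mapPath, h.pathSat_relativized_star_iff (ih ▸ fun hπ => (G.mem_dom_of_pathSat π hπ).1), ih,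
      LabeledGraph.pathSat_star]
  | .conv π, _, _ => h.pathSat_mapPath_iff π
  | .inter π₁ π₂, _, _ => and_congr (h.pathSat_mapPath_iff π₁) (h.pathSat_mapPath_iff π₂)

end

theorem Defines.models_mapSentence_iff (h : I.Defines H G) (Φ : IcSentence AP Γ) :
    H.Models (I.mapSentence Φ) ↔ G.Models Φ := by
  induction Φ with
  | ex σ =>
    refine exists_congr fun v => ?_
    change v ∈ H.dom ∧ H.StateSat (I.mapState σ) v ↔ v ∈ G.dom ∧ G.StateSat σ v
    rw [h.stateSat_mapState_iff σ]
    exact and_congr_left fun hσ =>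
      have hv : v ∈ G.dom := G.mem_dom_of_stateSat σ hσ
      ⟨fun _ => hv, fun _ => h.dom_subset hv⟩
  | or Φ₁ Φ₂ ih₁ ih₂ => exact or_congr ih₁ ih₂
  | not Φ ih => exact not_congr ih

end Semantics

section Size

/-- Every construct of a formula contributes at most `s` to the size of its translation along `I`.
The summand `3` counts the connectives that relativization adds around `I.dom`. -/
structure SizeLE (s : ℕ) : Prop where
  dom : I.dom.size + 3 ≤ s
  lab : ∀ p, (I.lab p).size ≤ s
  edge : ∀ γ, (I.edge γ).size ≤ s

variable {I} {s : ℕ}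

mutual

theorem SizeLE.size_mapState_le (h : I.SizeLE s) :
    ∀ σ : IcS AP Γ, (I.mapState σ).size ≤ s * σ.size
  | .prop p => by
    simpa only [mapState, IcS.size, mul_one] using h.lab p
  | .or σ₁ σ₂ => by
    have hdom := h.dom
    have ih₁ := h.size_mapState_le σ₁
    have ih₂ := h.size_mapState_le σ₂
    simp only [mapState, IcS.size, mul_add]
    omega
  | .not σ => by
    have hdom := h.dom
    have ih := h.size_mapState_le σ
    simp only [mapState, IcS.size, mul_add]
    omega
  | .diam π σ => by
    have hdom := h.dom
    have ihπ := h.size_mapPath_le π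
    have ihσ := h.size_mapState_le σ
    simp only [mapState, IcS.size, mul_add]
    omega
  | .loop π => by
    have hdom := h.dom
    have ih := h.size_mapPath_le π
    simp only [mapState, IcS.size, mul_add]
    omega

theorem SizeLE.size_mapPath_le (h : I.SizeLE s) :
    ∀ π : IcP AP Γ, (I.mapPath π).size ≤ s * π.size
  | .base γ => by
    simpa only [mapPath, IcP.size, mul_one] using h.edge γ
  | .test σ => by
    have hdom := h.dom
    have ih := h.size_mapState_le σ
    simp only [mapPath, IcP.size, mul_add]
    omega
  | .plus π₁ π₂ | .comp π₁ π₂ | .inter π₁ π₂ => by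
    have hdom := h.dom
    have ih₁ := h.size_mapPath_le π₁
    have ih₂ := h.size_mapPath_le π₂
    simp only [mapPath, IcP.size, mul_add]
    omega
  | .star π | .conv π => by
    have hdom := h.dom
    have ih := h.size_mapPath_le π
    simp only [mapPath, IcP.size, mul_add]
    omega

end

theorem SizeLE.size_mapSentence_le (h : I.SizeLE s) (Φ : IcSentence AP Γ) :
    (I.mapSentence Φ).size ≤ s * Φ.size := by
  have hdom := h.dom
  induction Φ with
  | ex σ =>
    have hσ := h.size_mapState_le σ
    simp only [mapSentence, IcSentence.size, mul_add]
    omega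
  | or Φ₁ Φ₂ ih₁ ih₂ =>
    simp only [mapSentence, IcSentence.size, mul_add]
    omega
  | not Φ ih =>
    simp only [mapSentence, IcSentence.size, mul_add]
    omega

end Size

section NoInter

/-- All formulas of `I` are in LCPDL. -/
structure NoInter : Prop where
  dom : I.dom.NoInter
  lab : ∀ p, (I.lab p).NoInter
  edge : ∀ γ, (I.edge γ).NoInter

variable {I}

mutual

theorem NoInter.mapState (h : I.NoInter) :
    ∀ σ : IcS AP Γ, σ.NoInter → (I.mapState σ).NoInter
  | .prop p, _ => h.lab p
  | .or σ₁ σ₂, hσ => ⟨h.mapState σ₁ hσ.1, h.mapState σ₂ hσ.2⟩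
  | .not σ, hσ => ⟨h.dom, h.mapState σ hσ⟩
  | .diam π σ, hσ => ⟨h.mapPath π hσ.1, h.mapState σ hσ.2⟩
  | .loop π, hσ => h.mapPath π hσ

theorem NoInter.mapPath (h : I.NoInter) :
    ∀ π : IcP AP Γ, π.NoInter → (I.mapPath π).NoInter
  | .base γ, _ => h.edge γ
  | .test σ, hπ => h.mapState σ hπ
  | .plus π₁ π₂, hπ => ⟨h.mapPath π₁ hπ.1, h.mapPath π₂ hπ.2⟩
  | .comp π₁ π₂, hπ => ⟨h.mapPath π₁ hπ.1, h.mapPath π₂ hπ.2⟩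
  | .star π, hπ => ⟨h.dom, h.mapPath π hπ⟩
  | .conv π, hπ => h.mapPath π hπ

end

theorem NoInter.mapSentence (h : I.NoInter) (Φ : IcSentence AP Γ) (hΦ : Φ.NoInter) :
    (I.mapSentence Φ).NoInter := by
  induction Φ with
  | ex σ => exact h.mapState σ hΦ
  | or Φ₁ Φ₂ ih₁ ih₂ => exact ⟨ih₁ hΦ.1, ih₂ hΦ.2⟩
  | not Φ ih => exact ih hΦ

end NoInter

end IcInterpretation

/-! ### Vertices and edges of `G_τ` in the tree of `τ` -/

namespace BTree

variable {Λ : Type}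

theorem mem_positions_of_labelAt_eq_some {t : BTree Λ} {p : List Bool} {l : Λ}
    (h : t.labelAt p = some l) : p ∈ t.positions :=
  Option.isSome_of_eq_some h

theorem mem_positions_of_append_mem_positions (t : BTree Λ) {p q : List Bool}
    (h : p ++ q ∈ t.positions) : p ∈ t.positions := by
  induction t generalizing p <;> rcases p with _ | ⟨_ | _, p⟩ <;>
    simp_all [positions, labelAt]

theorem mem_positions_of_childRel {t : BTree Λ} {b : Bool} {p q : List Bool}
    (h : t.childRel b p q) : p ∈ t.positions ∧ q ∈ t.positions := by
  obtain ⟨rfl, hq⟩ := h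
  exact ⟨t.mem_positions_of_append_mem_positions hq, hq⟩

end BTree

namespace STT

variable {Vl El : Type}

theorem vlabel_eq_some_iff (τ : STT Vl El) {p : List Bool} {a : Vl} :
    τ.vlabel p = some a ↔ ∃ i, τ.toTree.labelAt p = some (.atom i a) := by
  induction τ generalizing p <;> rcases p with _ | ⟨_ | _, p⟩ <;>
    simp_all [vlabel, toTree, BTree.labelAt]

theorem mem_vertices_iff (τ : STT Vl El) {p : List Bool} :
    p ∈ τ.vertices ↔ p ∈ τ.toTree.positions ∧ p ++ [false] ∉ τ.toTree.positions := by
  have root_mem_positions (ρ : STT Vl El) : (ρ.toTree.labelAt []).isSome := by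
    cases ρ <;> rfl
  induction τ generalizing p <;> rcases p with _ | ⟨_ | _, p⟩ <;>
    simp_all [vertices, vlabel, BTree.positions, toTree, BTree.labelAt]

theorem chi_plus_eq_some_iff (τ₁ τ₂ : STT Vl El) {i : ℕ} {p : List Bool} :
    (plus τ₁ τ₂).chi i = some p ↔
      (∃ q, τ₁.chi i = some q ∧ false :: q = p) ∨
        τ₁.chi i = none ∧ ∃ q, τ₂.chi i = some q ∧ true :: q = p := by
  cases h : τ₁.chi i <;> simp [chi, h]

theorem chi_forget_eq_some_iff (τ : STT Vl El) {i j : ℕ} {p : List Bool} :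
    (forget j τ).chi i = some p ↔ i ≠ j ∧ ∃ q, τ.chi i = some q ∧ false :: q = p := by
  by_cases h : i = j <;> simp [chi, h]

theorem chi_add_eq_some_iff (τ : STT Vl El) {γ : El} {i j₁ j₂ : ℕ} {p : List Bool} :
    (add γ j₁ j₂ τ).chi i = some p ↔ ∃ q, τ.chi i = some q ∧ false :: q = p :=
  Option.map_eq_some_iff

theorem mem_vertices_of_chi_eq_some (τ : STT Vl El) {i : ℕ} {p : List Bool}
    (h : τ.chi i = some p) : p ∈ τ.vertices := by
  induction τ generalizing p with
  | atom =>
    obtain ⟨-, hp⟩ := Option.ite_none_right_eq_some.1 h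
    cases hp
    rfl
  | add γ j₁ j₂ τ ih =>
    obtain ⟨q, hq, rfl⟩ := τ.chi_add_eq_some_iff.1 h
    exact ih hq
  | forget j τ ih =>
    obtain ⟨-, q, hq, rfl⟩ := τ.chi_forget_eq_some_iff.1 h
    exact ih hq
  | plus τ₁ τ₂ ih₁ ih₂ =>
    rcases (chi_plus_eq_some_iff τ₁ τ₂).1 h with ⟨q, hq, rfl⟩ | ⟨-, q, hq, rfl⟩
    · exact ih₁ hq
    · exact ih₂ hq

theorem mem_vertices_of_edgeRel (τ : STT Vl El) {γ : El} {u v : List Bool}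
    (h : τ.edgeRel γ u v) : u ∈ τ.vertices ∧ v ∈ τ.vertices := by
  induction τ generalizing u v with
  | atom => exact h.elim
  | add γ' i j τ ih =>
    rcases h with ⟨u, v, rfl, rfl, h⟩ | ⟨-, u, v, hu, hv, rfl, rfl⟩
    · exact ih h
    · exact ⟨τ.mem_vertices_of_chi_eq_some hu, τ.mem_vertices_of_chi_eq_some hv⟩
  | forget i τ ih =>
    obtain ⟨u, v, rfl, rfl, h⟩ := h
    exact ih h
  | plus τ₁ τ₂ ih₁ ih₂ =>
    rcases h with ⟨u, v, rfl, rfl, h⟩ | ⟨u, v, rfl, rfl, h⟩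
    · exact ih₁ h
    · exact ih₂ h

theorem mem_activeColors_of_chi_eq_some (τ : STT Vl El) {i : ℕ} {p : List Bool}
    (h : τ.chi i = some p) : i ∈ τ.activeColors := by
  induction τ generalizing p with
  | atom => exact (Option.ite_none_right_eq_some.1 h).1
  | add γ j₁ j₂ τ ih =>
    obtain ⟨q, hq, -⟩ := τ.chi_add_eq_some_iff.1 h
    exact ih hq
  | forget j τ ih =>
    obtain ⟨hij, q, hq, -⟩ := τ.chi_forget_eq_some_iff.1 h
    exact ⟨ih hq, hij⟩
  | plus τ₁ τ₂ ih₁ ih₂ =>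
    rcases (chi_plus_eq_some_iff τ₁ τ₂).1 h with ⟨q, hq, -⟩ | ⟨-, q, hq, -⟩
    · exact .inl (ih₁ hq)
    · exact .inr (ih₂ hq)

theorem Valid.chi_eq_none_of_chi_eq_some {k : ℕ} {τ₁ τ₂ : STT Vl El}
    (hτ : (plus τ₁ τ₂).Valid k) {i : ℕ} {p : List Bool} (h : τ₂.chi i = some p) :
    τ₁.chi i = none :=
  Option.eq_none_iff_forall_ne_some.2 fun _ h₁ =>
    hτ.2.2.ne_of_mem (τ₁.mem_activeColors_of_chi_eq_some h₁)
      (τ₂.mem_activeColors_of_chi_eq_some h) rfl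

theorem Valid.color_bounds_of_labelAt_eq_add {k : ℕ} {τ : STT Vl El} (hτ : τ.Valid k)
    {n : List Bool} {γ : El} {i j : ℕ} (h : τ.toTree.labelAt n = some (.add γ i j)) :
    (1 ≤ i ∧ i ≤ k) ∧ (1 ≤ j ∧ j ≤ k) := by
  induction τ generalizing n <;> rcases n with _ | ⟨_ | _, n⟩ <;>
    grind [Valid, toTree, BTree.labelAt]

end STT

/-- In a tree with labeling `ℓ`, the node `n ++ p` is a leaf of color `i`, and no node from there up
to `n` forgets `i`. Then `n ++ p` is the vertex of color `i` in the subterm at `n`. -/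
def CarriesColor {Vl El : Type} (ℓ : List Bool → Option (STTLabel Vl El)) (i : ℕ) :
    List Bool → List Bool → Prop
  | n, [] => ∃ a, ℓ n = some (.atom i a)
  | n, b :: p => ℓ n ≠ some (.forget i) ∧ CarriesColor ℓ i (n ++ [b]) p

/-- In a tree with labeling `ℓ`, some node labeled `Add^γ_{i,j}` adds an edge from `u` to `v`. -/
def AddsEdge {Vl El : Type} (ℓ : List Bool → Option (STTLabel Vl El)) (γ : El)
    (u v : List Bool) : Prop :=
  ∃ n i j, ℓ n = some (.add γ i j) ∧
    (∃ p, u = n ++ p ∧ CarriesColor ℓ i n p) ∧ ∃ q, v = n ++ q ∧ CarriesColor ℓ j n q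

section Labeling

variable {Vl El : Type} {ℓ : List Bool → Option (STTLabel Vl El)} {i : ℕ}

theorem CarriesColor.exists_label_eq_atom {n p : List Bool} (h : CarriesColor ℓ i n p) :
    ∃ a, ℓ (n ++ p) = some (.atom i a) := by
  induction p generalizing n with
  | nil => simpa [CarriesColor] using h
  | cons b p ih => simpa using ih h.2

theorem not_carriesColor_none {n p : List Bool} :
    ¬ CarriesColor (fun _ => (none : Option (STTLabel Vl El))) i n p := fun h => by
  obtain ⟨a, ⟨⟩⟩ := h.exists_label_eq_atom

theorem carriesColor_cons_iff {b : Bool} {n p : List Bool} :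
    CarriesColor ℓ i (b :: n) p ↔ CarriesColor (fun q => ℓ (b :: q)) i n p := by
  induction p generalizing n with
  | nil => rfl
  | cons c p ih => exact and_congr_right' ih

theorem carriesColor_nil_cons_iff {b : Bool} {p : List Bool} :
    CarriesColor ℓ i [] (b :: p) ↔
      ℓ [] ≠ some (.forget i) ∧ CarriesColor (fun q => ℓ (b :: q)) i [] p :=
  and_congr_right' carriesColor_cons_iff

theorem not_addsEdge_none {γ : El} {u v : List Bool} :
    ¬ AddsEdge (fun _ => (none : Option (STTLabel Vl El))) γ u v := by
  simp [AddsEdge]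

theorem addsEdge_iff_root_or_child {γ : El} {u v : List Bool} :
    AddsEdge ℓ γ u v ↔
      (∃ i j, ℓ [] = some (.add γ i j) ∧ CarriesColor ℓ i [] u ∧ CarriesColor ℓ j [] v) ∨
      ∃ b u' v', u = b :: u' ∧ v = b :: v' ∧ AddsEdge (fun q => ℓ (b :: q)) γ u' v' := by
  constructor
  · rintro ⟨_ | ⟨b, n⟩, i, j, hn, ⟨p, rfl, hp⟩, q, rfl, hq⟩
    · exact .inl ⟨i, j, hn, hp, hq⟩
    · exact .inr ⟨b, n ++ p, n ++ q, rfl, rfl, n, i, j, hn,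
        ⟨p, rfl, carriesColor_cons_iff.1 hp⟩, q, rfl, carriesColor_cons_iff.1 hq⟩
  · rintro (⟨i, j, hroot, hu, hv⟩ | ⟨b, _, _, rfl, rfl, n, i, j, hn, ⟨p, rfl, hp⟩, q, rfl, hq⟩)
    · exact ⟨[], i, j, hroot, ⟨u, rfl, hu⟩, v, rfl, hv⟩
    · exact ⟨b :: n, i, j, hn, ⟨p, rfl, carriesColor_cons_iff.2 hp⟩, q, rfl,
        carriesColor_cons_iff.2 hq⟩

end Labeling

namespace STT

variable {Vl El : Type} {k : ℕ} {τ : STT Vl El}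

theorem Valid.chi_eq_some_iff_carriesColor (hτ : τ.Valid k) {i : ℕ} {p : List Bool} :
    τ.chi i = some p ↔ CarriesColor τ.toTree.labelAt i [] p := by
  induction τ generalizing p with
  | atom j a =>
    rcases p with _ | ⟨b, p⟩
    · simp [chi, CarriesColor, toTree, BTree.labelAt, eq_comm]
    · simp [chi, carriesColor_nil_cons_iff, toTree, BTree.labelAt, not_carriesColor_none]
  | add γ j₁ j₂ τ ih =>
    rcases p with _ | ⟨_ | _, p⟩
    · simp [chi, CarriesColor, toTree, BTree.labelAt]
    · simp [chi, carriesColor_nil_cons_iff, toTree, BTree.labelAt, ih hτ.2.2.2.2]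
    · simp [chi, carriesColor_nil_cons_iff, toTree, BTree.labelAt, not_carriesColor_none]
  | forget j τ ih =>
    rcases p with _ | ⟨_ | _, p⟩
    · simp [chi, CarriesColor, toTree, BTree.labelAt]
    · simp [chi, carriesColor_nil_cons_iff, toTree, BTree.labelAt, ih hτ.2.2, eq_comm]
    · simp [chi, carriesColor_nil_cons_iff, toTree, BTree.labelAt, not_carriesColor_none]
  | plus τ₁ τ₂ ih₁ ih₂ =>
    rw [chi_plus_eq_some_iff]
    rcases p with _ | ⟨_ | _, p⟩
    · simp [CarriesColor, toTree, BTree.labelAt]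
    · simp [carriesColor_nil_cons_iff, toTree, BTree.labelAt, ih₁ hτ.1]
    · have hnone : τ₂.chi i = some p → τ₁.chi i = none := hτ.chi_eq_none_of_chi_eq_some
      simpa [carriesColor_nil_cons_iff, toTree, BTree.labelAt, ← ih₂ hτ.2.1] using hnone

theorem Valid.edgeRel_iff_addsEdge (hτ : τ.Valid k) {γ : El} {u v : List Bool} :
    τ.edgeRel γ u v ↔ AddsEdge τ.toTree.labelAt γ u v := by
  induction τ generalizing u v with
  | atom =>
    rw [addsEdge_iff_root_or_child]
    simp [edgeRel, toTree, BTree.labelAt, not_addsEdge_none]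
  | add γ' i j τ ih =>
    rw [addsEdge_iff_root_or_child, Bool.exists_bool]
    simp only [← hτ.chi_eq_some_iff_carriesColor, chi_add_eq_some_iff]
    simp only [edgeRel, ih hτ.2.2.2.2, toTree, BTree.labelAt, Option.some.injEq,
      STTLabel.add.injEq, not_addsEdge_none, and_false, exists_const, or_false]
    grind
  | forget i τ ih =>
    rw [addsEdge_iff_root_or_child, Bool.exists_bool]
    simp [edgeRel, toTree, BTree.labelAt, not_addsEdge_none, ih hτ.2.2]
  | plus τ₁ τ₂ ih₁ ih₂ =>
    rw [addsEdge_iff_root_or_child, Bool.exists_bool]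
    simp [edgeRel, toTree, BTree.labelAt, ih₁ hτ.1, ih₂ hτ.2.1]

end STT

/-! ### Interpreting `G_τ` in the tree of `τ` -/

/-- The union `f 0 + ⋯ + f m` of path formulas. -/
def IcP.choice {AP Γ : Type} (f : ℕ → IcP AP Γ) : ℕ → IcP AP Γ
  | 0 => f 0
  | m + 1 => .plus (IcP.choice f m) (f (m + 1))

section Choice

variable {AP Γ V : Type} {f : ℕ → IcP AP Γ}

theorem LabeledGraph.pathSat_choice_iff (G : LabeledGraph AP Γ V) {m : ℕ} {u v : V} :
    G.PathSat (.choice f m) u v ↔ ∃ i ≤ m, G.PathSat (f i) u v := by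
  induction m with
  | zero => simp [IcP.choice]
  | succ m ih => simp [IcP.choice, ih, Nat.le_succ_iff, or_and_right, exists_or]

theorem IcP.size_choice_le {s : ℕ} (hf : ∀ i, (f i).size + 1 ≤ s) (m : ℕ) :
    (choice f m).size + 1 ≤ (m + 1) * s := by
  induction m with
  | zero => simpa [choice] using hf 0
  | succ m ih =>
    have hlast := hf (m + 1)
    simp only [choice, size, add_one_mul] at ih ⊢
    omega

theorem IcP.noInter_choice (hf : ∀ i, (f i).NoInter) (m : ℕ) : (choice f m).NoInter := by
  induction m with
  | zero => exact hf 0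
  | succ m ih => exact ⟨ih, hf (m + 1)⟩

end Choice

namespace STT

variable {AP Γ : Type}

/-- The graph `G_τ`. -/
def graph (τ : STT (Set AP) Γ) : LabeledGraph AP Γ (List Bool) where
  dom := τ.vertices
  lab v p := ∃ s, τ.vlabel v = some s ∧ p ∈ s
  edge := τ.edgeRel
  mem_dom_of_edge := τ.mem_vertices_of_edgeRel

/-- The tree of `τ`, as a graph with the two child relations as edges. -/
def treeGraph (τ : STT (Set AP) Γ) : LabeledGraph (APk AP Γ) Bool (List Bool) where
  dom := τ.toTree.positions
  lab := sttTreeLab τ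
  edge := τ.toTree.childRel
  mem_dom_of_edge := BTree.mem_positions_of_childRel

/-- The state formula defining the leaves, as the nodes without a `↓0`-child. The disjunction is a
tautology. -/
def leafFormula : IcS (APk AP Γ) Bool :=
  .not (.diam (.base false) (.or (.prop .plus) (.not (.prop .plus))))

/-- The path formula leading from a node to its parent, provided that the parent does not forget
the color `i`. -/
def climbStep (i : ℕ) : IcP (APk AP Γ) Bool :=
  .comp (.plus (.conv (.base false)) (.conv (.base true))) (.test (.not (.prop (.forget i))))

/-- The path formula leading from a leaf of color `i` to the ancestors at which it still carries
`i`. -/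
def climb (i : ℕ) : IcP (APk AP Γ) Bool :=
  .comp (.test (.prop (.color i))) (.star (climbStep i))

/-- The path formula for the edges added by the nodes labeled `Add^γ_{i,j}`. -/
def addEdge (γ : Γ) (i j : ℕ) : IcP (APk AP Γ) Bool :=
  .comp (climb i) (.comp (.test (.prop (.add γ i j))) (.conv (climb j)))

/-- The path formula for the `γ`-edges of a `k`-STT. The shift by one is due to the colors being
`1, …, k`. -/
def edgeFormula (k : ℕ) (γ : Γ) : IcP (APk AP Γ) Bool :=
  .choice (fun i => .choice (fun j => addEdge γ (i + 1) (j + 1)) (k - 1)) (k - 1)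

/-- The interpretation of the graph of a `k`-STT in its tree. -/
def interpretation (k : ℕ) : IcInterpretation AP Γ (APk AP Γ) Bool where
  dom := leafFormula
  lab p := .prop (.base p)
  edge := edgeFormula k

section Semantics

variable (τ : STT (Set AP) Γ) {u v n : List Bool} {i j : ℕ} {γ : Γ}

theorem sttTreeLab_base_iff {p : AP} :
    sttTreeLab τ v (.base p) ↔ ∃ s, τ.vlabel v = some s ∧ p ∈ s := by
  simp only [vlabel_eq_some_iff, sttTreeLab]
  split <;> simp_all

theorem sttTreeLab_color_iff :
    sttTreeLab τ v (.color i) ↔ ∃ a, τ.toTree.labelAt v = some (.atom i a) := by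
  unfold sttTreeLab
  cases τ.toTree.labelAt v with
  | none => simp
  | some l => cases l <;> simp [eq_comm]

theorem sttTreeLab_forget_iff :
    sttTreeLab τ v (.forget i) ↔ τ.toTree.labelAt v = some (.forget i) := by
  unfold sttTreeLab
  cases τ.toTree.labelAt v with
  | none => simp
  | some l => cases l <;> simp [eq_comm]

theorem sttTreeLab_add_iff :
    sttTreeLab τ v (.add γ i j) ↔ τ.toTree.labelAt v = some (.add γ i j) := by
  unfold sttTreeLab
  cases τ.toTree.labelAt v with
  | none => simp
  | some l => cases l <;> simp [eq_comm]

theorem stateSat_leafFormula_iff : τ.treeGraph.StateSat leafFormula v ↔ v ∈ τ.vertices := by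
  rw [mem_vertices_iff]
  refine and_congr_right' (not_congr ⟨?_, fun hchild => ?_⟩)
  · rintro ⟨_, ⟨rfl, hchild⟩, -⟩
    exact hchild
  · refine ⟨v ++ [false], ⟨rfl, hchild⟩, ?_⟩
    by_cases hplus : sttTreeLab τ (v ++ [false]) .plus
    · exact .inl ⟨hchild, hplus⟩
    · exact .inr ⟨hchild, fun h => hplus h.2⟩

theorem pathSat_climbStep_iff :
    τ.treeGraph.PathSat (climbStep i) u v ↔
      ∃ b, u = v ++ [b] ∧ u ∈ τ.toTree.positions ∧ τ.toTree.labelAt v ≠ some (.forget i) := by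
  have hparent (b : Bool) (hu : u = v ++ [b] ∧ u ∈ τ.toTree.positions) :
      v ∈ τ.toTree.positions :=
    (BTree.mem_positions_of_childRel hu).1
  simp only [climbStep, LabeledGraph.pathSat_comp, LabeledGraph.pathSat_plus,
    LabeledGraph.pathSat_conv, LabeledGraph.pathSat_base, LabeledGraph.pathSat_test,
    LabeledGraph.stateSat_not, LabeledGraph.stateSat_prop, treeGraph, BTree.childRel,
    sttTreeLab_forget_iff, Bool.exists_bool]
  grind

theorem pathSat_climb_iff_reflTransGen :
    τ.treeGraph.PathSat (climb i) u n ↔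
      (∃ a, τ.toTree.labelAt u = some (.atom i a)) ∧
        Relation.ReflTransGen (τ.treeGraph.PathSat (climbStep i)) u n := by
  rw [← sttTreeLab_color_iff]
  constructor
  · rintro ⟨_, ⟨rfl, hu, hcolor⟩, hstar⟩
    exact ⟨hcolor, (LabeledGraph.pathSat_star_iff_reflTransGen _ hu).1 hstar⟩
  · rintro ⟨hcolor, hsteps⟩
    obtain ⟨_, hlabel⟩ := τ.sttTreeLab_color_iff.1 hcolor
    have hu : u ∈ τ.toTree.positions := BTree.mem_positions_of_labelAt_eq_some hlabel
    exact ⟨u, ⟨rfl, hu, hcolor⟩, (LabeledGraph.pathSat_star_iff_reflTransGen _ hu).2 hsteps⟩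

theorem pathSat_climb_iff :
    τ.treeGraph.PathSat (climb i) u n ↔
      ∃ p, u = n ++ p ∧ CarriesColor τ.toTree.labelAt i n p := by
  rw [pathSat_climb_iff_reflTransGen]
  constructor
  · rintro ⟨hcolor, hsteps⟩
    induction hsteps with
    | refl => exact ⟨[], (List.append_nil u).symm, hcolor⟩
    | tail _ hstep ih =>
      obtain ⟨p, rfl, hp⟩ := ih
      obtain ⟨b, rfl, -, hforget⟩ := τ.pathSat_climbStep_iff.1 hstep
      exact ⟨b :: p, List.append_assoc .., hforget, hp⟩
  · rintro ⟨p, rfl, hp⟩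
    refine ⟨hp.exists_label_eq_atom, ?_⟩
    induction p generalizing n with
    | nil => simpa using Relation.ReflTransGen.refl
    | cons b p ih =>
      obtain ⟨_, hleaf⟩ := hp.2.exists_label_eq_atom
      have hchild : n ++ [b] ∈ τ.toTree.positions :=
        BTree.mem_positions_of_append_mem_positions _
          (BTree.mem_positions_of_labelAt_eq_some hleaf)
      have hstep : τ.treeGraph.PathSat (climbStep i) (n ++ [b]) n :=
        τ.pathSat_climbStep_iff.2 ⟨b, rfl, hchild, hp.1⟩
      simpa using (ih hp.2).tail hstep

theorem pathSat_addEdge_iff :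
    τ.treeGraph.PathSat (addEdge γ i j) u v ↔
      ∃ n, τ.toTree.labelAt n = some (.add γ i j) ∧
        (∃ p, u = n ++ p ∧ CarriesColor τ.toTree.labelAt i n p) ∧
        ∃ q, v = n ++ q ∧ CarriesColor τ.toTree.labelAt j n q := by
  simp only [← pathSat_climb_iff, ← sttTreeLab_add_iff]
  constructor
  · rintro ⟨n, hu, _, ⟨rfl, -, hadd⟩, hv⟩
    exact ⟨n, hadd, hu, hv⟩
  · rintro ⟨n, hadd, hu, hv⟩
    exact ⟨n, hu, n, ⟨rfl, (LabeledGraph.mem_dom_of_pathSat _ _ hu).2, hadd⟩, hv⟩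

variable {τ} {k : ℕ}

theorem Valid.pathSat_edgeFormula_iff (hτ : τ.Valid k) :
    τ.treeGraph.PathSat (edgeFormula k γ) u v ↔ τ.edgeRel γ u v := by
  simp only [hτ.edgeRel_iff_addsEdge, edgeFormula, LabeledGraph.pathSat_choice_iff,
    pathSat_addEdge_iff]
  constructor
  · rintro ⟨i, -, j, -, n, hn⟩
    exact ⟨n, i + 1, j + 1, hn⟩
  · rintro ⟨n, i, j, hadd, hn⟩
    obtain ⟨hi, hj⟩ := hτ.color_bounds_of_labelAt_eq_add hadd
    obtain ⟨i, rfl⟩ := Nat.exists_eq_add_of_le' hi.1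
    obtain ⟨j, rfl⟩ := Nat.exists_eq_add_of_le' hj.1
    exact ⟨i, Nat.le_sub_one_of_lt hi.2, j, Nat.le_sub_one_of_lt hj.2, n, hadd, hn⟩

theorem Valid.interpretation_defines (hτ : τ.Valid k) :
    (interpretation k).Defines τ.treeGraph τ.graph where
  dom_iff := τ.stateSat_leafFormula_iff
  lab_iff {p v} := by
    have hleaf (h : sttTreeLab τ v (.base p)) :
        v ∈ τ.toTree.positions ∧ v ∈ τ.vertices := by
      obtain ⟨s, hs, -⟩ := τ.sttTreeLab_base_iff.1 h
      have hv : v ∈ τ.vertices := Option.isSome_of_eq_some hs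
      exact ⟨(τ.mem_vertices_iff.1 hv).1, hv⟩
    change v ∈ τ.toTree.positions ∧ sttTreeLab τ v (.base p) ↔
      v ∈ τ.vertices ∧ ∃ s, τ.vlabel v = some s ∧ p ∈ s
    rw [← sttTreeLab_base_iff]
    tauto
  edge_iff := hτ.pathSat_edgeFormula_iff

end Semantics

section Size

theorem size_edgeFormula_le {k : ℕ} (hk : 0 < k) (γ : Γ) :
    (edgeFormula k γ : IcP (APk AP Γ) Bool).size ≤ 32 * k ^ 2 := by
  have hadd (i j : ℕ) : (addEdge γ i j : IcP (APk AP Γ) Bool).size + 1 ≤ 32 := le_rfl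
  have hchoice := IcP.size_choice_le (fun i =>
    IcP.size_choice_le (fun j => hadd (i + 1) (j + 1)) (k - 1)) (k - 1)
  rw [Nat.sub_add_cancel hk] at hchoice
  calc (edgeFormula k γ : IcP (APk AP Γ) Bool).size
    _ ≤ k * (k * 32) := Nat.le_of_succ_le hchoice
    _ = 32 * k ^ 2 := by ring

theorem interpretation_sizeLE {k : ℕ} (hk : 0 < k) :
    (interpretation k : IcInterpretation AP Γ (APk AP Γ) Bool).SizeLE (32 * k ^ 2) := by
  have hpos : 1 ≤ k ^ 2 := Nat.one_le_pow _ _ hk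
  refine ⟨?_, fun _ => ?_, size_edgeFormula_le hk⟩
  · change 10 ≤ 32 * k ^ 2
    omega
  · change 1 ≤ 32 * k ^ 2
    omega

theorem interpretation_noInter (k : ℕ) :
    (interpretation k : IcInterpretation AP Γ (APk AP Γ) Bool).NoInter where
  dom := by simp [interpretation, leafFormula, IcS.NoInter, IcP.NoInter]
  lab _ := trivial
  edge _ := IcP.noInter_choice (fun _ => IcP.noInter_choice (fun _ => by
    simp [addEdge, climb, climbStep, IcS.NoInter, IcP.NoInter]) _) _

end Size

end STT

theorem icpdl_stt_interpretation_general :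
    ∃ c : ℕ, ∀ (AP Γ : Type) (Φ : IcSentence AP Γ) (k : ℕ), 0 < k →
      ∃ Ψ : IcSentence (APk AP Γ) Bool,
        Ψ.size ≤ c * k ^ 2 * Φ.size ∧
        (Φ.NoInter → Ψ.NoInter) ∧
        ∀ τ : STT (Set AP) Γ, τ.Valid k →
          (icSentSem τ.vertices
              (fun v p => ∃ s, τ.vlabel v = some s ∧ p ∈ s) τ.edgeRel Φ ↔
           icSentSem (STT.toTree τ).positions (sttTreeLab τ)
              (fun b u v => (STT.toTree τ).childRel b u v) Ψ) :=
  ⟨32, fun _ _ Φ k hk => ⟨(STT.interpretation k).mapSentence Φ,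
    (STT.interpretation_sizeLE hk).size_mapSentence_le Φ,
    (STT.interpretation_noInter k).mapSentence Φ,
    fun _ hτ => (hτ.interpretation_defines.models_mapSentence_iff Φ).symm⟩⟩

/-- There exists a constant `c` such that for every finite set
`AP` of atomic propositions, finite set `Γ` of edge labels, every ICPDL
sentence `Φ` over `(AP, Γ)` and every `k > 0`, there is an ICPDL sentence
`Φ~^k` over `(AP^k, {↓0,↓1})` of size at most `c·k²·|Φ|` such that for every
valid `k`-STT `τ` with `⟦τ⟧ = (G,χ)`: `G ⊨ Φ` iff `τ ⊨ Φ~^k`.  Moreover, if `Φ`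
is in LCPDL then `Φ~^k` can be chosen in LCPDL. -/
theorem icpdl_stt_interpretation :
    ∃ c : ℕ, ∀ (AP Γ : Type), Fintype AP → Fintype Γ →
      ∀ (Φ : IcSentence AP Γ) (k : ℕ), 0 < k →
        ∃ Ψ : IcSentence (APk AP Γ) Bool,
          Ψ.size ≤ c * k ^ 2 * Φ.size ∧
          (Φ.NoInter → Ψ.NoInter) ∧
          ∀ τ : STT (Set AP) Γ, τ.Valid k →
            (icSentSem τ.vertices
                (fun v p => ∃ s, τ.vlabel v = some s ∧ p ∈ s) τ.edgeRel Φ ↔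
             icSentSem (STT.toTree τ).positions (sttTreeLab τ)
                (fun b u v => (STT.toTree τ).childRel b u v) Ψ) := by
  obtain ⟨c, h⟩ := icpdl_stt_interpretation_general
  exact ⟨c, fun AP Γ _ _ => h AP Γ⟩
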